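/- Failure of cut elimination: in the propositional polarized sequent calculus modulo the rewrite system with the single negative rule P ⟶₋ Q and the single positive rule P ⟶₊ ¬Q, the sequent ⊢ Q has no cut-free proof, although it is provable with cut; hence this calculus does not admit cut elimination. -/

import Mathlib

/-!
With cut, `⊢ Q` follows by cutting on `P`, which rewrites to `Q` negatively and to `¬Q` positively:
the premises are `Q ⊢ Q` and `⊢ ¬Q, Q`, and both come from the axiom `Q ⊢ Q`.

Without cut, no sequent `⊢ Q, …, Q` (any number of copies, including none) is provable. Since `Q`
has no positive rewrite step, a cut-free proof of such a sequent can only end with a contraction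
or a weakening on the right, and its premise is again of that form; the axiom and all remaining
rules need a formula on the left or one rewriting to a negation or a disjunction.
-/

/-- Propositional formulas over the atoms P and Q, with ⊥, ¬ and ∨. -/
inductive Fm
  | P | Q
  | bot
  | neg : Fm → Fm
  | or : Fm → Fm → Fm
deriving DecidableEq

/-- A formula is atomic if it is P or Q. -/
def Fm.Atomic : Fm → Prop
  | Fm.P => True
  | Fm.Q => True
  | _ => False

/-- The negative rewrite rule P ⟶₋ Q. -/
inductive Rn : Fm → Fm → Prop
  | pq : Rn Fm.P Fm.Q

/-- The positive rewrite rule P ⟶₊ ¬Q. -/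
inductive Rp : Fm → Fm → Prop
  | pnq : Rp Fm.P (Fm.neg Fm.Q)

/-- Reflexive-transitive closure ⟶₋* of the negative rewrite relation. -/
def RnS : Fm → Fm → Prop := Relation.ReflTransGen Rn

/-- Reflexive-transitive closure ⟶₊* of the positive rewrite relation. -/
def RpS : Fm → Fm → Prop := Relation.ReflTransGen Rp

/-- The polarized sequent calculus modulo the rewrite system {P ⟶₋ Q, P ⟶₊ ¬Q}.
`Pf b Γ Δ` means the sequent Γ ⊢ Δ is provable; the cut rule is available only
when `b = true`, so `Pf false Γ Δ` is cut-free provability. -/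
inductive Pf : Bool → Multiset Fm → Multiset Fm → Prop
  | ax {b A B R} : RnS A R → RpS B R → Fm.Atomic R → Pf b {A} {B}
  | cut {Γ Δ A B C} : Pf true (B ::ₘ Γ) Δ → Pf true Γ (C ::ₘ Δ) →
      RnS A B → RpS A C → Pf true Γ Δ
  | contrL {b Γ Δ A B C} : Pf b (B ::ₘ C ::ₘ Γ) Δ → RnS A B → RnS A C →
      Pf b (A ::ₘ Γ) Δ
  | contrR {b Γ Δ A B C} : Pf b Γ (B ::ₘ C ::ₘ Δ) → RpS A B → RpS A C →
      Pf b Γ (A ::ₘ Δ)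
  | weakL {b Γ Δ A} : Pf b Γ Δ → Pf b (A ::ₘ Γ) Δ
  | weakR {b Γ Δ A} : Pf b Γ Δ → Pf b Γ (A ::ₘ Δ)
  | botL {b Γ Δ A} : RnS A Fm.bot → Pf b (A ::ₘ Γ) Δ
  | negL {b Γ Δ A B} : Pf b Γ (B ::ₘ Δ) → RnS A (Fm.neg B) → Pf b (A ::ₘ Γ) Δ
  | negR {b Γ Δ A B} : Pf b (B ::ₘ Γ) Δ → RpS A (Fm.neg B) → Pf b Γ (A ::ₘ Δ)
  | orL {b Γ Δ A B C} : Pf b (B ::ₘ Γ) Δ → Pf b (C ::ₘ Γ) Δ →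
      RnS A (Fm.or B C) → Pf b (A ::ₘ Γ) Δ
  | orR {b Γ Δ A B C} : Pf b Γ (B ::ₘ C ::ₘ Δ) → RpS A (Fm.or B C) →
      Pf b Γ (A ::ₘ Δ)

theorem RpS.eq_of_Q {X : Fm} (h : RpS Fm.Q X) : X = Fm.Q := by
  induction h with
  | refl => rfl
  | tail _ h ih => subst ih; cases h

theorem Pf.false_of_forall_eq_Q {b : Bool} {Γ Δ : Multiset Fm} (h : Pf b Γ Δ)
    (hb : b = false) (hΓ : Γ = 0) (hΔ : ∀ X ∈ Δ, X = Fm.Q) : False := by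
  induction h with
  | cut => cases hb
  | ax => simp at hΓ
  | contrL | weakL | botL | negL | orL => simp at hΓ
  | contrR _ hB hC ih =>
    obtain ⟨rfl, hΔ'⟩ := Multiset.forall_mem_cons.1 hΔ
    exact ih hb hΓ (Multiset.forall_mem_cons.2
      ⟨hB.eq_of_Q, Multiset.forall_mem_cons.2 ⟨hC.eq_of_Q, hΔ'⟩⟩)
  | weakR _ ih => exact ih hb hΓ (Multiset.forall_mem_cons.1 hΔ).2
  | negR _ hA | orR _ hA =>
    obtain ⟨rfl, -⟩ := Multiset.forall_mem_cons.1 hΔ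
    cases hA.eq_of_Q

/-- Failure of cut elimination: the sequent ⊢ Q is provable with cut in the
polarized sequent calculus modulo {P ⟶₋ Q, P ⟶₊ ¬Q}, but it has no cut-free
proof; hence this calculus does not admit cut elimination. -/
theorem stmt10 :
    Pf true (0 : Multiset Fm) {Fm.Q} ∧ ¬ Pf false (0 : Multiset Fm) {Fm.Q} := by
  constructor
  · have hQ : Pf true {Fm.Q} {Fm.Q} := Pf.ax .refl .refl trivial
    exact Pf.cut (A := Fm.P) hQ (Pf.negR hQ .refl) (.single .pq) (.single .pnq)
  · exact fun h => h.false_of_forall_eq_Q rfl rfl (by simp)
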